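/- arXiv:1406.2058 — 4 statements merged into one kernel-verified Lean document; each statement's English description precedes it below -/
import Mathlib

section
/- The selection monad transformer satisfies the associativity law: for every lawful monad m, every ε : SelT r m x and all f : x → SelT r m y, g : y → SelT r m z, one has (ε >>= f) >>= g = ε >>= (fun a => f a >>= g). -/
universe u v

/-- The selection monad transformer. -/
def SelT (r : Type u) (m : Type u → Type v) (x : Type u) : Type (max u v) :=
  (x → m r) → m x

/-- `pure` for the selection monad transformer. -/
def SelT.pure {r : Type u} {m : Type u → Type v} [Monad m] {x : Type u} (a : x) :
    SelT r m x := fun _ => Pure.pure a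

/-- `bind` for the selection monad transformer. -/
def SelT.bind {r : Type u} {m : Type u → Type v} [Monad m] {x x' : Type u}
    (ε : SelT r m x) (f : x → SelT r m x') : SelT r m x' :=
  fun p => (ε (fun a => f a p >>= p)) >>= fun a => f a p


/-- The selection monad transformer satisfies the associativity law. -/
theorem selT_assoc {m : Type u → Type v} [Monad m] [LawfulMonad m]
    {r x y z : Type u} (ε : SelT r m x) (f : x → SelT r m y) (g : y → SelT r m z) :
    SelT.bind (SelT.bind ε f) g = SelT.bind ε (fun a => SelT.bind (f a) g) := by
  funext p
  -- Both sides pass the continuation `fun b => g b p >>= p` to `f a`, so they differ only by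
  -- associativity in `m`, once inside the argument of `ε` and once outside.
  simp only [SelT.bind, bind_assoc]
end

section
/- Correctness of the selection-function SAT solver: define Φ : (n : ℕ) → ((Fin n → Bool) → Bool) → (Fin n → Bool) by recursion: Φ 0 q is the empty function, and Φ (n+1) q := Fin.cons a (b a), where b : Bool → (Fin n → Bool) is b x := Φ n (fun ys => q (Fin.cons x ys)) and a : Bool is a := q (Fin.cons true (b true)), i.e. a = ε (fun x => q (Fin.cons x (b x))) for the selection function ε p := p true. Then for every n and every q : (Fin n → Bool) → Bool, there exists xs with q xs = true if and only if q (Φ n q) = true. -/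
/-!
By induction on the number of variables, `b x` satisfies `q (Fin.cons x ·)` whenever anything does.
Hence if `q` is satisfiable, one of the candidates `Fin.cons x (b x)` with `x : Bool` satisfies it.
Taking `x = q (Fin.cons true (b true))` selects the candidate starting with `true` when that one
works, and otherwise the candidate starting with `false`, which is then the only one left.
-/

/-- The selection-function SAT solver: the `n`-fold product of the selection
function `ε p := p true`, unfolded into an explicit recursion. -/
def Φ : (n : ℕ) → ((Fin n → Bool) → Bool) → (Fin n → Bool)
  | 0, _ => Fin.elim0
  | n + 1, q =>
    let b : Bool → (Fin n → Bool) := fun x => Φ n (fun ys => q (Fin.cons x ys))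
    let a : Bool := q (Fin.cons true (b true))
    Fin.cons a (b a)

/-- Correctness of the selection-function SAT solver: `q` is satisfiable iff
`Φ n q` is a satisfying assignment. -/
theorem Φ_correct (n : ℕ) (q : (Fin n → Bool) → Bool) :
    (∃ xs : Fin n → Bool, q xs = true) ↔ q (Φ n q) = true := by
  refine ⟨?_, fun h => ⟨_, h⟩⟩
  induction n with
  | zero =>
    rintro ⟨xs, h⟩
    rwa [Subsingleton.elim (Φ 0 q) xs]
  | succ n ih =>
    rintro ⟨xs, h⟩
    -- The induction hypothesis lets the recursive call choose the tail of `xs`.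
    have hb := ih (fun ys => q (Fin.cons (xs 0) ys)) ⟨Fin.tail xs, by simpa using h⟩
    simp only [Φ]
    -- The head chosen by `Φ` is `true` exactly when its candidate starting with `true` satisfies `q`.
    cases ha : q (Fin.cons true (Φ n fun ys => q (Fin.cons true ys))) with
    | true => exact ha
    | false =>
      -- No assignment starting with `true` satisfies `q`, so `xs` starts with `false`.
      cases h0 : xs 0 with
      | true => simp [h0, ha] at hb
      | false => simpa [h0] using hb
end

section
/- Correctness of the continuation-monad SAT solver: define Ψ : (n : ℕ) → ((Fin n → Bool) → Bool) → Bool by recursion: Ψ 0 q := q (the empty function), and Ψ (n+1) q := E (fun x => Ψ n (fun ys => q (Fin.cons x ys))), where E : (Bool → Bool) → Bool is the quantifier E p := p (p true). Then for every n and every q : (Fin n → Bool) → Bool, Ψ n q = true if and only if there exists xs : Fin n → Bool with q xs = true. -/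
/-- The continuation-monad SAT solver: the `n`-fold product of the quantifier
`E p := p (p true)`, unfolded into an explicit recursion. -/
def Ψ : (n : ℕ) → ((Fin n → Bool) → Bool) → Bool
  | 0, q => q Fin.elim0
  | n + 1, q =>
    (fun p => p (p true)) (fun x => Ψ n (fun ys => q (Fin.cons x ys)))

/-- `p (p true)` computes the existential quantifier on `Bool`: if `p true` holds, it evaluates
`p` at the witness `true`; otherwise it evaluates `p` at `false`, the only remaining candidate. -/
lemma apply_apply_true_iff_exists (p : Bool → Bool) : p (p true) = true ↔ ∃ x, p x = true := by
  cases h : p true <;> simp [h]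

/-- Correctness of the continuation-monad SAT solver: `Ψ n q` is true iff `q` is
satisfiable. -/
theorem Ψ_correct (n : ℕ) (q : (Fin n → Bool) → Bool) :
    Ψ n q = true ↔ ∃ xs : Fin n → Bool, q xs = true := by
  induction n with
  | zero =>
    rw [Fin.exists_fin_zero_pi, Ψ]
    exact iff_of_eq (congrArg (q · = true) (Subsingleton.elim _ _))
  | succ n ih =>
    -- A satisfying assignment splits into its first bit and the remaining `n` bits.
    rw [Fin.exists_fin_succ_pi, Ψ]
    exact (apply_apply_true_iff_exists fun x => Ψ n fun ys => q (Fin.cons x ys)).trans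
      (exists_congr fun x => ih _)
end

section
/- Explicit form of the product of nondeterministic selection functions: work in the Set monad (Set X with pure a := {a} and bind s f := ⋃ x ∈ s, f x). For ε : (X → Set R) → Set X, δ : (Y → Set R) → Set Y and q : X → Y → Set R, let b : X → Set Y be b x := δ (q x) and let a : Set X be a := ε (fun x => {r | ∃ y ∈ b x, r ∈ q x y}). Then the monoidal product ε ⊗ δ := ε >>= fun x => δ >>= fun y => pure (x, y), formed in the selection monad transformer over the Set monad, satisfies (ε ⊗ δ) (fun z => q z.1 z.2) = {z : X × Y | z.1 ∈ a ∧ z.2 ∈ b z.1}. -/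
/-!
The singletons produced by `pure (x, y)` collapse every union in the inner bind, so for fixed `x`
it returns `{x} × δ (q x)`. The outer bind therefore evaluates `ε` at `x ↦ ⋃ y ∈ δ (q x), q x y`
and takes the union of the sets `{x} × δ (q x)` over the resulting `x`.
-/

/-- The selection monad transformer over the `Set` monad. -/
def SelTSet (R X : Type*) := (X → Set R) → Set X

/-- `pure` for the selection monad transformer over the `Set` monad. -/
def SelTSet.pure {R X : Type*} (a : X) : SelTSet R X := fun _ => {a}

/-- `bind` for the selection monad transformer over the `Set` monad:
`(ε >>= f) p = (ε (fun x => f x p >>= p)) >>= fun x => f x p`, where the `Set`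
monad has `pure a = {a}` and `bind s g = ⋃ x ∈ s, g x`. -/
def SelTSet.bind {R X Y : Type*} (ε : SelTSet R X) (f : X → SelTSet R Y) :
    SelTSet R Y :=
  fun p => ⋃ x ∈ ε (fun x => ⋃ y ∈ f x p, p y), f x p

/-- The monoidal product `ε ⊗ δ := ε >>= fun x => δ >>= fun y => pure (x, y)`. -/
def SelTSet.prod {R X Y : Type*} (ε : SelTSet R X) (δ : SelTSet R Y) :
    SelTSet R (X × Y) :=
  SelTSet.bind ε (fun x => SelTSet.bind δ (fun y => SelTSet.pure (x, y)))

/-- Explicit form of the product of nondeterministic selection functions. -/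
theorem selTSet_prod_explicit {X Y R : Type*} (ε : SelTSet R X) (δ : SelTSet R Y)
    (q : X → Y → Set R) :
    SelTSet.prod ε δ (fun z => q z.1 z.2) =
      {z : X × Y |
        z.1 ∈ ε (fun x => {r | ∃ y ∈ δ (q x), r ∈ q x y}) ∧ z.2 ∈ δ (q z.1)} := by
  -- The union over `pure (x, y)` is a singleton union, so `δ` is evaluated exactly at `q x`.
  have inner (x : X) : SelTSet.bind δ (fun y => SelTSet.pure (x, y)) (fun z => q z.1 z.2) =
      Prod.mk x '' δ (q x) := by
    ext z
    simp [SelTSet.bind, SelTSet.pure, eq_comm]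
  have outer (x : X) : (⋃ z ∈ Prod.mk x '' δ (q x), q z.1 z.2) =
      {r | ∃ y ∈ δ (q x), r ∈ q x y} := by
    ext r
    simp
  rw [SelTSet.prod, SelTSet.bind]
  simp only [inner, outer]
  ext ⟨x, y⟩
  simp [and_comm]
end
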